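/- Fix positive reals p₋₁, p₀, p₁ and let P(1) = p₋₁ + p₀ + p₁. Let w_{n,k} denote the total weight of Motzkin walks of length n with exactly k sign changes, b_{n,k} the total weight of bridges of length n with k sign changes, and b⁺_{n,k} the total weight of positive bridges of length n with k sign changes. For real z with 0 < z < 1/P(1) and real u with 0 ≤ u ≤ 1, write W(z,u) = Σ_{n,k} w_{n,k} zⁿ u^k, B(z,u) = Σ_{n,k} b_{n,k} zⁿ u^k, B₊(z,u) = Σ_{n,k} b⁺_{n,k} zⁿ u^k, W(z) = 1/(1−zP(1)) and B(z) = B(z,1). Then all these series converge and W(z,u) = B(z,u)·W(z)/B(z) + B₊(z,u)·(W(z)/B(z) − 1)·(u − 1). -/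

import Mathlib

open scoped BigOperators Classical

/-- Value of a step encoded by `Fin 3`: `0 ↦ -1`, `1 ↦ 0`, `2 ↦ +1`. -/
def stepVal (s : Fin 3) : ℤ := (s : ℤ) - 1

/-- Weight of a single step: `p₋₁` for `-1`, `p₀` for `0`, `p₁` for `+1`. -/
def stepWeight (pm p0 p1 : ℝ) (s : Fin 3) : ℝ :=
  if s = 0 then pm else if s = 1 then p0 else p1

/-- Weight of a Motzkin walk (product of its step weights). -/
def walkWeight (pm p0 p1 : ℝ) {n : ℕ} (w : Fin n → Fin 3) : ℝ :=
  ∏ i, stepWeight pm p0 p1 (w i)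

/-- Partial sum `ω_j` of the walk `w`. -/
def psum {n : ℕ} (w : Fin n → Fin 3) (j : ℕ) : ℤ :=
  ∑ i ∈ Finset.univ.filter (fun i : Fin n => (i : ℕ) < j), stepVal (w i)

/-- Total weight of Motzkin bridges of length `n`. -/
noncomputable def bridgeW (pm p0 p1 : ℝ) (n : ℕ) : ℝ :=
  ∑ w ∈ Finset.univ.filter (fun w : Fin n → Fin 3 => psum w n = 0),
    walkWeight pm p0 p1 w

/-- Number of returns to zero of a walk of length `n`. -/
def retZero {n : ℕ} (w : Fin n → Fin 3) : ℕ :=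
  ((Finset.Icc 1 n).filter (fun j => psum w j = 0)).card

/-- Total weight of walks of length `n` with exactly `k` returns to zero. -/
noncomputable def walkRetW (pm p0 p1 : ℝ) (n k : ℕ) : ℝ :=
  ∑ w ∈ Finset.univ.filter (fun w : Fin n → Fin 3 => retZero w = k),
    walkWeight pm p0 p1 w

/-- Number of sign changes of a walk of length `n`. -/
def signChanges {n : ℕ} (w : Fin n → Fin 3) : ℕ :=
  (((Finset.range (n+1)) ×ˢ (Finset.range (n+1))).filter
    (fun p => p.1 < p.2 ∧ psum w p.1 * psum w p.2 < 0 ∧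
      ∀ l ∈ Finset.Ioo p.1 p.2, psum w l = 0)).card

/-- Total weight of bridges of length `n` with exactly `k` sign changes. -/
noncomputable def bridgeSignW (pm p0 p1 : ℝ) (n k : ℕ) : ℝ :=
  ∑ w ∈ Finset.univ.filter
      (fun w : Fin n → Fin 3 => psum w n = 0 ∧ signChanges w = k),
    walkWeight pm p0 p1 w

/-- Total weight of positive excursions of length `n`. -/
noncomputable def posExcW (pm p0 p1 : ℝ) (n : ℕ) : ℝ :=
  ∑ w ∈ Finset.univ.filter
      (fun w : Fin n → Fin 3 => psum w n = 0 ∧ ∀ j ∈ Finset.range (n+1), 0 ≤ psum w j),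
    walkWeight pm p0 p1 w

/-- Total weight of negative excursions of length `n`. -/
noncomputable def negExcW (pm p0 p1 : ℝ) (n : ℕ) : ℝ :=
  ∑ w ∈ Finset.univ.filter
      (fun w : Fin n → Fin 3 => psum w n = 0 ∧ ∀ j ∈ Finset.range (n+1), psum w j ≤ 0),
    walkWeight pm p0 p1 w

/-- A positive bridge: a bridge whose last nonzero partial sum is positive. -/
def IsPosBridge {n : ℕ} (w : Fin n → Fin 3) : Prop :=
  psum w n = 0 ∧ ∃ j ∈ Finset.range (n+1),
    0 < psum w j ∧ ∀ l ∈ Finset.Ioc j n, psum w l = 0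

/-- A negative bridge: a bridge whose last nonzero partial sum is negative. -/
def IsNegBridge {n : ℕ} (w : Fin n → Fin 3) : Prop :=
  psum w n = 0 ∧ ∃ j ∈ Finset.range (n+1),
    psum w j < 0 ∧ ∀ l ∈ Finset.Ioc j n, psum w l = 0

instance {n : ℕ} (w : Fin n → Fin 3) : Decidable (IsPosBridge w) := by
  unfold IsPosBridge; infer_instance

instance {n : ℕ} (w : Fin n → Fin 3) : Decidable (IsNegBridge w) := by
  unfold IsNegBridge; infer_instance

/-- Total weight of positive bridges of length `n` with `k` sign changes. -/
noncomputable def posBridgeSignW (pm p0 p1 : ℝ) (n k : ℕ) : ℝ :=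
  ∑ w ∈ Finset.univ.filter
      (fun w : Fin n → Fin 3 => IsPosBridge w ∧ signChanges w = k),
    walkWeight pm p0 p1 w

/-- Total weight of negative bridges of length `n` with `k` sign changes. -/
noncomputable def negBridgeSignW (pm p0 p1 : ℝ) (n k : ℕ) : ℝ :=
  ∑ w ∈ Finset.univ.filter
      (fun w : Fin n → Fin 3 => IsNegBridge w ∧ signChanges w = k),
    walkWeight pm p0 p1 w

/-- Total weight of walks of length `n` with `k` sign changes. -/
noncomputable def walkSignW (pm p0 p1 : ℝ) (n k : ℕ) : ℝ :=
  ∑ w ∈ Finset.univ.filter (fun w : Fin n → Fin 3 => signChanges w = k),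
    walkWeight pm p0 p1 w

/-- Height of a walk of length `n` (as a natural number; it is `max_j ω_j ≥ 0`). -/
def height {n : ℕ} (w : Fin n → Fin 3) : ℕ :=
  (Finset.range (n+1)).sup (fun j => (psum w j).toNat)

/-- Total weight of walks of length `n` of height exactly `h`. -/
noncomputable def heightW (pm p0 p1 : ℝ) (n h : ℕ) : ℝ :=
  ∑ w ∈ Finset.univ.filter (fun w : Fin n → Fin 3 => height w = h),
    walkWeight pm p0 p1 w

/-!
Cut a walk at its last visit to the axis into a bridge and a tail that never returns. If the tail
is nonempty, it creates one extra sign change exactly when the bridge ends on the other side of the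
axis, and reflection preserves the weight of a bridge, so on either side such bridges are counted
by `A(z,u) = B(z,u) + (u - 1) B₊(z,u)`. An empty tail creates no sign change, which gives
`W(z,u) + (u - 1) B₊(z,u) = A(z,u) T(z)` with `T` the series of the tails. At `u = 1` this reads
`W(z) = B(z) T(z)`, which identifies `T(z)` as `W(z) / B(z)`.

To avoid cutting walks, the decomposition is carried out on sums `∑ weight(w) φ(ω_n)` over walks:
removing the last step of a walk off the axis replaces the test function `φ` by its image under the
transition operator of the walk killed at `0`.
-/

section

open Finset

lemma sum_pi_fin_succ_eq_sum_snoc {α M : Type*} [Fintype α] [AddCommMonoid M] {n : ℕ}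
    (f : (Fin (n + 1) → α) → M) :
    ∑ w, f w = ∑ a, ∑ w : Fin n → α, f (Fin.snoc w a) := by
  rw [← (Fin.snocEquiv fun _ => α).sum_comp, Fintype.sum_prod_type]
  rfl

section Walk

variable {n : ℕ} (w : Fin n → Fin 3) (s : Fin 3)

lemma abs_stepVal_le_one : |stepVal s| ≤ 1 := by
  revert s
  decide

lemma stepVal_rev : stepVal s.rev = -stepVal s := by
  revert s
  decide

lemma psum_zero : psum w 0 = 0 := by
  simp [psum]

lemma psum_self : psum w n = ∑ i, stepVal (w i) := by
  simp [psum]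

lemma psum_snoc_of_le {j : ℕ} (hj : j ≤ n) :
    psum (Fin.snoc w s : Fin (n + 1) → Fin 3) j = psum w j := by
  simp [psum, sum_filter, Fin.sum_univ_castSucc, hj]

lemma psum_snoc_self :
    psum (Fin.snoc w s : Fin (n + 1) → Fin 3) (n + 1) = psum w n + stepVal s := by
  simp [psum_self, Fin.sum_univ_castSucc]

lemma psum_rev (j : ℕ) : psum (Fin.rev ∘ w) j = -psum w j := by
  simp [psum, stepVal_rev]

lemma signChanges_rev : signChanges (Fin.rev ∘ w) = signChanges w := by
  simp [signChanges, psum_rev]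

lemma isNegBridge_rev : IsNegBridge (Fin.rev ∘ w) ↔ IsPosBridge w := by
  simp [IsNegBridge, IsPosBridge, psum_rev]

lemma isPosBridge_rev : IsPosBridge (Fin.rev ∘ w) ↔ IsNegBridge w := by
  simp [IsNegBridge, IsPosBridge, psum_rev]

lemma signChanges_eq_sum :
    signChanges w = ∑ j ∈ range (n + 1),
      #{i ∈ range j | psum w i * psum w j < 0 ∧ ∀ l ∈ Ioo i j, psum w l = 0} := by
  rw [signChanges, card_filter, sum_product_right]
  refine sum_congr rfl fun j hj => ?_
  rw [← card_filter]
  congr 1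
  ext i
  simp only [mem_filter, mem_range] at hj ⊢
  exact ⟨fun h => h.2, fun h => ⟨h.1.trans hj, h⟩⟩

lemma signChanges_snoc :
    signChanges (Fin.snoc w s : Fin (n + 1) → Fin 3) = signChanges w +
      #{i ∈ range (n + 1) | psum w i * (psum w n + stepVal s) < 0 ∧
        ∀ l ∈ Ioc i n, psum w l = 0} := by
  rw [signChanges_eq_sum, signChanges_eq_sum, sum_range_succ]
  congr 1
  · refine sum_congr rfl fun j hj => congrArg card (filter_congr fun i hi => ?_)
    rw [mem_range] at hi hj
    rw [psum_snoc_of_le w s (by omega), psum_snoc_of_le w s (by omega)]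
    refine and_congr_right fun _ => forall₂_congr fun l hl => ?_
    rw [psum_snoc_of_le w s (by rw [mem_Ioo] at hl; omega)]
  · refine congrArg card (filter_congr fun i hi => ?_)
    rw [mem_range] at hi
    rw [psum_snoc_of_le w s (by omega), psum_snoc_self]
    have hIoo : Ioo i (n + 1) = Ioc i n := by
      ext l
      simp only [mem_Ioo, mem_Ioc]
      omega
    rw [hIoo]
    refine and_congr_right fun _ => forall₂_congr fun l hl => ?_
    rw [psum_snoc_of_le w s (mem_Ioc.1 hl).2]

lemma card_last_neg_eq_ite (hw : 0 ≤ psum w n) :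
    #{i ∈ range (n + 1) | psum w i < 0 ∧ ∀ l ∈ Ioc i n, psum w l = 0} =
      if IsNegBridge w then 1 else 0 := by
  split_ifs with h
  · obtain ⟨-, j, hj, hneg, hzero⟩ := h
    refine card_eq_one.2 ⟨j, eq_singleton_iff_unique_mem.2
      ⟨mem_filter.2 ⟨hj, hneg, hzero⟩, fun i hi => ?_⟩⟩
    simp only [mem_filter, mem_range, mem_Ioc] at hi hj hzero
    rcases lt_trichotomy i j with hij | hij | hij
    · exact absurd (hi.2.2 j ⟨hij, by omega⟩) hneg.ne
    · exact hij
    · exact absurd (hzero i ⟨hij, by omega⟩) hi.2.1.ne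
  · refine card_eq_zero.2 (filter_eq_empty_iff.2 ?_)
    rintro i hi ⟨hneg, hzero⟩
    have hin : i ≠ n := by
      rintro rfl
      exact hneg.not_ge hw
    rw [mem_range] at hi
    exact h ⟨hzero n (mem_Ioc.2 ⟨by omega, le_rfl⟩), i, mem_range.2 hi, hneg, hzero⟩

lemma signChanges_snoc_of_pos (h : 0 < psum w n + stepVal s) :
    signChanges (Fin.snoc w s : Fin (n + 1) → Fin 3) =
      signChanges w + if IsNegBridge w then 1 else 0 := by
  have hw : 0 ≤ psum w n := by
    have := (abs_le.1 (abs_stepVal_le_one s)).2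
    omega
  have hsign (a : ℤ) : a * (psum w n + stepVal s) < 0 ↔ a < 0 := by
    simp [mul_neg_iff, h, h.not_gt]
  simp only [signChanges_snoc, hsign, card_last_neg_eq_ite w hw]

lemma signChanges_snoc_of_neg (h : psum w n + stepVal s < 0) :
    signChanges (Fin.snoc w s : Fin (n + 1) → Fin 3) =
      signChanges w + if IsPosBridge w then 1 else 0 := by
  have hrev := signChanges_snoc_of_pos (Fin.rev ∘ w) s.rev (by
    rw [psum_rev, stepVal_rev]
    omega)
  rw [← Fin.comp_snoc] at hrev
  simpa only [signChanges_rev, isNegBridge_rev] using hrev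

/-- A bridge whose last excursion lies on the other side of the axis than a step `s` taken next.
The level step is grouped with the down step, which is harmless as it does not leave the axis. -/
def IsOppositeBridge : Prop :=
  if 0 < stepVal s then IsNegBridge w else IsPosBridge w

variable {w s}

lemma IsOppositeBridge.psum_eq_zero (h : IsOppositeBridge w s) : psum w n = 0 := by
  unfold IsOppositeBridge at h
  split_ifs at h <;> exact h.1

lemma signChanges_snoc_of_ne_zero (h : psum w n + stepVal s ≠ 0) :
    signChanges (Fin.snoc w s : Fin (n + 1) → Fin 3) =
      signChanges w + if IsOppositeBridge w s then 1 else 0 := by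
  by_cases hw : psum w n = 0
  · rw [hw, zero_add] at h
    rcases h.lt_or_gt with hs | hs
    · rw [signChanges_snoc_of_neg w s (by omega)]
      simp [IsOppositeBridge, hs.not_gt]
    · rw [signChanges_snoc_of_pos w s (by omega)]
      simp [IsOppositeBridge, hs]
  · have hneg : ¬IsNegBridge w := fun hb => hw hb.1
    have hpos : ¬IsPosBridge w := fun hb => hw hb.1
    have hopp : ¬IsOppositeBridge w s := fun hb => hw hb.psum_eq_zero
    rcases h.lt_or_gt with hs | hs
    · simp only [signChanges_snoc_of_neg w s hs, hpos, hopp]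
    · simp only [signChanges_snoc_of_pos w s hs, hneg, hopp]

lemma pow_signChanges_snoc_mul {R : Type*} [CommRing R] (u : R) {ψ : ℤ → R} (hψ : ψ 0 = 0)
    (w : Fin n → Fin 3) (s : Fin 3) :
    u ^ signChanges (Fin.snoc w s : Fin (n + 1) → Fin 3) * ψ (psum w n + stepVal s) =
      u ^ signChanges w * ψ (psum w n + stepVal s) +
        if IsOppositeBridge w s then (u - 1) * u ^ signChanges w * ψ (stepVal s) else 0 := by
  by_cases hend : psum w n + stepVal s = 0
  · have hopp : IsOppositeBridge w s → ψ (stepVal s) = 0 := fun h => by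
      rw [← hψ, ← hend, h.psum_eq_zero, zero_add]
    simp +contextual [hend, hψ, hopp]
  · rw [signChanges_snoc_of_ne_zero hend]
    split_ifs with h
    · rw [h.psum_eq_zero, zero_add]
      ring
    · simp

end Walk

section Weight

variable (pm p0 p1 : ℝ) {n : ℕ}

lemma walkWeight_snoc (w : Fin n → Fin 3) (s : Fin 3) :
    walkWeight pm p0 p1 (Fin.snoc w s : Fin (n + 1) → Fin 3) =
      walkWeight pm p0 p1 w * stepWeight pm p0 p1 s := by
  simp [walkWeight, Fin.prod_univ_castSucc]

lemma walkWeight_eq_pow_card (w : Fin n → Fin 3) :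
    walkWeight pm p0 p1 w =
      pm ^ #{i | w i = 0} * p0 ^ #{i | w i = 1} * p1 ^ #{i | w i = 2} := by
  rw [walkWeight, ← prod_fiberwise' univ w, Fin.prod_univ_three]
  simp [stepWeight]

lemma psum_self_eq_card_sub_card (w : Fin n → Fin 3) :
    psum w n = #{i | w i = 2} - #{i | w i = 0} := by
  rw [psum_self, ← sum_fiberwise' univ w, Fin.sum_univ_three]
  have h0 : stepVal 0 = -1 := rfl
  have h1 : stepVal 1 = 0 := rfl
  have h2 : stepVal 2 = 1 := rfl
  simp only [h0, h1, h2, sum_const, nsmul_eq_mul]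
  ring

lemma walkWeight_rev_of_bridge {w : Fin n → Fin 3} (hw : psum w n = 0) :
    walkWeight pm p0 p1 (Fin.rev ∘ w) = walkWeight pm p0 p1 w := by
  have hcard : #{i | w i = 2} = #{i | w i = 0} := by
    rw [psum_self_eq_card_sub_card] at hw
    omega
  have h0 : ∀ s : Fin 3, s.rev = 0 ↔ s = 2 := by decide
  have h1 : ∀ s : Fin 3, s.rev = 1 ↔ s = 1 := by decide
  have h2 : ∀ s : Fin 3, s.rev = 2 ↔ s = 0 := by decide
  simp only [walkWeight_eq_pow_card, Function.comp_apply, h0, h1, h2, hcard]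

lemma sum_stepWeight : ∑ s, stepWeight pm p0 p1 s = pm + p0 + p1 := by
  simp [Fin.sum_univ_three, stepWeight]

lemma abs_stepWeight (s : Fin 3) : |stepWeight pm p0 p1 s| = stepWeight |pm| |p0| |p1| s := by
  unfold stepWeight
  split_ifs <;> rfl

lemma sum_walkWeight (n : ℕ) :
    ∑ w : Fin n → Fin 3, walkWeight pm p0 p1 w = (pm + p0 + p1) ^ n := by
  rw [← sum_stepWeight, Fintype.sum_pow]
  rfl

lemma sum_abs_walkWeight (n : ℕ) :
    ∑ w : Fin n → Fin 3, |walkWeight pm p0 p1 w| = (|pm| + |p0| + |p1|) ^ n := by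
  simp only [← sum_walkWeight, walkWeight, abs_prod, abs_stepWeight]

end Weight

section Enumerator

variable {𝕜 : Type*} [RCLike 𝕜] (pm p0 p1 : ℝ) (u : 𝕜) {n : ℕ}

/-- Total weight of the walks in the class `Q`, with `u` marking sign changes: the coefficient of
`zⁿ` in the bivariate generating function of `Q`. -/
noncomputable def signEnumerator (Q : (Fin n → Fin 3) → Prop) [DecidablePred Q] : 𝕜 :=
  ∑ w with Q w, (walkWeight pm p0 p1 w : 𝕜) * u ^ signChanges w

/-- Sum of a test function `φ` over the endpoints of all walks of length `n`, weighted with `u`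
marking sign changes. -/
noncomputable def endpointSum (n : ℕ) (φ : ℤ → 𝕜) : 𝕜 :=
  ∑ w : Fin n → Fin 3, (walkWeight pm p0 p1 w : 𝕜) * u ^ signChanges w * φ (psum w n)

/-- Transition operator, acting on test functions, of the walk killed when it steps onto `0`. -/
noncomputable def killedStep (φ : ℤ → 𝕜) (x : ℤ) : 𝕜 :=
  ∑ s, (stepWeight pm p0 p1 s : 𝕜) * Function.update φ 0 0 (x + stepVal s)

/-- Total weight of the tails of length `j`, the walks that never return to the axis, obtained by
iterating the killed transition operator on the constant `1`. -/
noncomputable def tailWeight (𝕜 : Type*) [RCLike 𝕜] (j : ℕ) : 𝕜 :=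
  (killedStep pm p0 p1)^[j] (fun _ => (1 : 𝕜)) 0

lemma signEnumerator_isNegBridge :
    signEnumerator pm p0 p1 u (IsNegBridge (n := n)) =
      signEnumerator pm p0 p1 u (IsPosBridge (n := n)) := by
  refine sum_nbij' (Fin.rev ∘ ·) (Fin.rev ∘ ·) ?_ ?_ ?_ ?_ ?_
  · simp [isPosBridge_rev]
  · simp [isNegBridge_rev]
  · simp [← Function.comp_assoc, Fin.rev_involutive.comp_self]
  · simp [← Function.comp_assoc, Fin.rev_involutive.comp_self]
  · intro w hw
    rw [signChanges_rev, walkWeight_rev_of_bridge _ _ _ (mem_filter.1 hw).2.1]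

lemma signEnumerator_isOppositeBridge (s : Fin 3) :
    signEnumerator pm p0 p1 u (fun w : Fin n → Fin 3 => IsOppositeBridge w s) =
      signEnumerator pm p0 p1 u (IsPosBridge (n := n)) := by
  by_cases hs : 0 < stepVal s
  · rw [← signEnumerator_isNegBridge]
    simp [signEnumerator, IsOppositeBridge, hs]
  · simp [signEnumerator, IsOppositeBridge, hs]

lemma signEnumerator_true :
    signEnumerator pm p0 p1 u (fun _ : Fin n → Fin 3 => True) =
      endpointSum pm p0 p1 u n fun _ => 1 := by
  simp [signEnumerator, endpointSum]

lemma endpointSum_eq_add_update (φ : ℤ → 𝕜) :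
    endpointSum pm p0 p1 u n φ =
      signEnumerator pm p0 p1 u (fun w : Fin n → Fin 3 => psum w n = 0) * φ 0 +
        endpointSum pm p0 p1 u n (Function.update φ 0 0) := by
  rw [endpointSum, endpointSum, signEnumerator, sum_filter, sum_mul, ← sum_add_distrib]
  refine sum_congr rfl fun w _ => ?_
  by_cases h : psum w n = 0 <;> simp [h]

lemma sum_walkWeight_mul_pow_signChanges_snoc {ψ : ℤ → 𝕜} (hψ : ψ 0 = 0) (s : Fin 3) :
    ∑ w : Fin n → Fin 3, (walkWeight pm p0 p1 w : 𝕜) *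
        (u ^ signChanges (Fin.snoc w s : Fin (n + 1) → Fin 3) * ψ (psum w n + stepVal s)) =
      endpointSum pm p0 p1 u n (fun x => ψ (x + stepVal s)) +
        (u - 1) * signEnumerator pm p0 p1 u (IsPosBridge (n := n)) * ψ (stepVal s) := by
  rw [← signEnumerator_isOppositeBridge pm p0 p1 u s, signEnumerator, endpointSum, sum_filter,
    mul_sum, sum_mul, ← sum_add_distrib]
  refine sum_congr rfl fun w _ => ?_
  rw [pow_signChanges_snoc_mul u hψ]
  split_ifs <;> ring

lemma endpointSum_succ_of_apply_zero {ψ : ℤ → 𝕜} (hψ : ψ 0 = 0) :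
    endpointSum pm p0 p1 u (n + 1) ψ =
      endpointSum pm p0 p1 u n (fun x => ∑ s, (stepWeight pm p0 p1 s : 𝕜) * ψ (x + stepVal s)) +
        (u - 1) * signEnumerator pm p0 p1 u (IsPosBridge (n := n)) *
          ∑ s, (stepWeight pm p0 p1 s : 𝕜) * ψ (stepVal s) := by
  calc endpointSum pm p0 p1 u (n + 1) ψ
      = ∑ s, (stepWeight pm p0 p1 s : 𝕜) * ∑ w : Fin n → Fin 3,
          (walkWeight pm p0 p1 w : 𝕜) *
            (u ^ signChanges (Fin.snoc w s : Fin (n + 1) → Fin 3) *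
              ψ (psum w n + stepVal s)) := by
        rw [endpointSum, sum_pi_fin_succ_eq_sum_snoc]
        simp only [walkWeight_snoc, psum_snoc_self, mul_sum, RCLike.ofReal_mul]
        exact sum_congr rfl fun s _ => sum_congr rfl fun w _ => by ring
    _ = ∑ s, (stepWeight pm p0 p1 s : 𝕜) *
          (endpointSum pm p0 p1 u n (fun x => ψ (x + stepVal s)) +
            (u - 1) * signEnumerator pm p0 p1 u (IsPosBridge (n := n)) * ψ (stepVal s)) := by
        simp only [sum_walkWeight_mul_pow_signChanges_snoc _ _ _ _ hψ]
    _ = _ := by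
        simp only [mul_add, sum_add_distrib, endpointSum, mul_sum]
        rw [sum_comm]
        congr 1
        · exact sum_congr rfl fun w _ => sum_congr rfl fun s _ => by ring
        · exact sum_congr rfl fun s _ => by ring

lemma endpointSum_succ (φ : ℤ → 𝕜) :
    endpointSum pm p0 p1 u (n + 1) φ =
      signEnumerator pm p0 p1 u (fun w : Fin (n + 1) → Fin 3 => psum w (n + 1) = 0) * φ 0 +
        (endpointSum pm p0 p1 u n (killedStep pm p0 p1 φ) +
          (u - 1) * signEnumerator pm p0 p1 u (IsPosBridge (n := n)) *
            killedStep pm p0 p1 φ 0) := by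
  rw [endpointSum_eq_add_update, endpointSum_succ_of_apply_zero _ _ _ _ (by simp)]
  simp only [killedStep, zero_add]
  rfl

/-- Enumerator of bridges in which a positive bridge counts one additional sign change, as it does
when the walk continues below the axis. -/
noncomputable def pivotEnumerator (n : ℕ) : 𝕜 :=
  signEnumerator pm p0 p1 u (fun w : Fin n → Fin 3 => psum w n = 0) +
    (u - 1) * signEnumerator pm p0 p1 u (IsPosBridge (n := n))

lemma endpointSum_add_eq_sum_antidiagonal (φ : ℤ → 𝕜) :
    endpointSum pm p0 p1 u n φ +
        (u - 1) * signEnumerator pm p0 p1 u (IsPosBridge (n := n)) * φ 0 =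
      ∑ ij ∈ antidiagonal n,
        pivotEnumerator pm p0 p1 u ij.1 * (killedStep pm p0 p1)^[ij.2] φ 0 := by
  induction n generalizing φ with
  | zero =>
    rw [endpointSum_eq_add_update]
    have hoff : endpointSum pm p0 p1 u 0 (Function.update φ 0 0) = 0 :=
      sum_eq_zero fun w _ => by rw [psum_zero, Function.update_self, mul_zero]
    simp only [pivotEnumerator, hoff, Finset.Nat.antidiagonal_zero, sum_singleton,
      Function.iterate_zero, id_eq]
    ring
  | succ n ih =>
    rw [Nat.sum_antidiagonal_succ', endpointSum_succ, ih]
    simp only [pivotEnumerator, Function.iterate_zero, id_eq, Function.iterate_succ_apply]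
    ring

lemma signEnumerator_true_add_eq_sum_antidiagonal (n : ℕ) :
    signEnumerator pm p0 p1 u (fun _ : Fin n → Fin 3 => True) +
        (u - 1) * signEnumerator pm p0 p1 u (IsPosBridge (n := n)) =
      ∑ ij ∈ antidiagonal n, pivotEnumerator pm p0 p1 u ij.1 * tailWeight pm p0 p1 𝕜 ij.2 := by
  rw [signEnumerator_true]
  simpa only [mul_one, tailWeight] using
    endpointSum_add_eq_sum_antidiagonal pm p0 p1 u fun _ => (1 : 𝕜)

lemma signEnumerator_true_one (n : ℕ) :
    signEnumerator pm p0 p1 (1 : 𝕜) (fun _ : Fin n → Fin 3 => True) =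
      ((pm + p0 + p1 : ℝ) : 𝕜) ^ n := by
  simp [signEnumerator, ← RCLike.ofReal_sum, sum_walkWeight]

end Enumerator

section Bounds

variable {𝕜 : Type*} [RCLike 𝕜] (pm p0 p1 : ℝ) {u : 𝕜} {n : ℕ}

lemma sum_norm_walkWeight_mul_pow_le (hu : ‖u‖ ≤ 1) (Q : (Fin n → Fin 3) → Prop)
    [DecidablePred Q] :
    ∑ w with Q w, ‖(walkWeight pm p0 p1 w : 𝕜) * u ^ signChanges w‖ ≤
      (|pm| + |p0| + |p1|) ^ n := by
  rw [← sum_abs_walkWeight]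
  refine (sum_le_univ_sum_of_nonneg fun w => norm_nonneg _).trans (sum_le_sum fun w _ => ?_)
  rw [norm_mul, RCLike.norm_ofReal, norm_pow]
  exact mul_le_of_le_one_right (abs_nonneg _) (pow_le_one₀ (norm_nonneg u) hu)

lemma norm_signEnumerator_le (hu : ‖u‖ ≤ 1) (Q : (Fin n → Fin 3) → Prop) [DecidablePred Q] :
    ‖signEnumerator pm p0 p1 u Q‖ ≤ (|pm| + |p0| + |p1|) ^ n :=
  (norm_sum_le _ _).trans (sum_norm_walkWeight_mul_pow_le pm p0 p1 hu Q)

lemma norm_killedStep_le {φ : ℤ → 𝕜} {C : ℝ} (hφ : ∀ x, ‖φ x‖ ≤ C) (x : ℤ) :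
    ‖killedStep pm p0 p1 φ x‖ ≤ (|pm| + |p0| + |p1|) * C := by
  have hupdate : ∀ y, ‖Function.update φ 0 0 y‖ ≤ C := fun y => by
    by_cases hy : y = 0
    · simpa [hy] using (norm_nonneg _).trans (hφ 0)
    · simpa [hy] using hφ y
  rw [← sum_stepWeight, sum_mul]
  refine norm_sum_le_of_le _ fun s _ => ?_
  rw [norm_mul, RCLike.norm_ofReal, abs_stepWeight]
  exact mul_le_mul_of_nonneg_left (hupdate _) (abs_stepWeight pm p0 p1 s ▸ abs_nonneg _)

lemma norm_iterate_killedStep_le {φ : ℤ → 𝕜} {C : ℝ} (hφ : ∀ x, ‖φ x‖ ≤ C) (j : ℕ) (x : ℤ) :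
    ‖(killedStep pm p0 p1)^[j] φ x‖ ≤ (|pm| + |p0| + |p1|) ^ j * C := by
  induction j generalizing x with
  | zero => simpa using hφ x
  | succ j ih =>
    rw [Function.iterate_succ_apply', pow_succ', mul_assoc]
    exact norm_killedStep_le pm p0 p1 ih x

lemma norm_tailWeight_le (j : ℕ) :
    ‖tailWeight pm p0 p1 𝕜 j‖ ≤ (|pm| + |p0| + |p1|) ^ j := by
  simpa [tailWeight] using
    norm_iterate_killedStep_le pm p0 p1 (φ := fun _ => (1 : 𝕜)) (C := 1) (by simp) j 0

end Bounds

section Summability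

lemma summable_norm_mul_pow_of_norm_le {R : Type*} [NormedRing R] [NormOneClass R]
    {a : ℕ → R} {P : ℝ} {z : R} (hP : 0 ≤ P) (ha : ∀ n, ‖a n‖ ≤ P ^ n) (hz : ‖z‖ * P < 1) :
    Summable fun n => ‖a n * z ^ n‖ := by
  refine Summable.of_nonneg_of_le (fun n => norm_nonneg _) (fun n => ?_)
    (summable_geometric_of_lt_one (by positivity) hz)
  calc ‖a n * z ^ n‖ ≤ ‖a n‖ * ‖z ^ n‖ := norm_mul_le _ _
    _ ≤ P ^ n * ‖z‖ ^ n := mul_le_mul (ha n) (norm_pow_le _ _) (norm_nonneg _) (by positivity)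
    _ = (‖z‖ * P) ^ n := by rw [mul_pow, mul_comm]

lemma hasSum_sum_filter_eq {ι κ M : Type*} [DecidableEq κ] [AddCommMonoid M]
    [TopologicalSpace M] [ContinuousAdd M] (s : Finset ι) (c : ι → κ) (f : ι → M) :
    HasSum (fun k => ∑ i ∈ s with c i = k, f i) (∑ i ∈ s, f i) := by
  simp only [sum_filter]
  exact hasSum_sum fun i _ => by simpa only [eq_comm] using hasSum_ite_eq (c i) (f i)

lemma hasSum_prod_sum_filter_eq {α κ E : Type*} {ι : α → Type*} [DecidableEq κ]
    [NormedAddCommGroup E] [CompleteSpace E] (s : ∀ n, Finset (ι n)) (c : ∀ n, ι n → κ)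
    {f : ∀ n, ι n → E}
    (hf : Summable fun n => ∑ i ∈ s n, ‖f n i‖) :
    HasSum (fun p : α × κ => ∑ i ∈ s p.1 with c p.1 i = p.2, f p.1 i)
      (∑' n, ∑ i ∈ s n, f n i) := by
  have hfiber (n : α) := hasSum_sum_filter_eq (s n) (c n) fun i => ‖f n i‖
  have hnorm : Summable fun p : α × κ => ∑ i ∈ s p.1 with c p.1 i = p.2, ‖f p.1 i‖ := by
    rw [summable_prod_of_nonneg fun p => sum_nonneg fun i _ => norm_nonneg _]
    refine ⟨fun n => (hfiber n).summable, ?_⟩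
    simpa only [(hfiber _).tsum_eq] using hf
  have hsum := hnorm.of_norm_bounded fun p => norm_sum_le _ fun i => f p.1 i
  convert hsum.hasSum using 1
  rw [hsum.tsum_prod]
  exact tsum_congr fun n => (hasSum_sum_filter_eq (s n) (c n) (f n)).tsum_eq.symm

end Summability

section GeneratingFunction

variable {𝕜 : Type*} [RCLike 𝕜] (pm p0 p1 : ℝ) (z u : 𝕜)

/-- Bivariate generating function of a class `Q` of walks, `z` marking length and `u` marking sign
changes. -/
noncomputable def signGF (Q : ∀ n, (Fin n → Fin 3) → Prop) [∀ n, DecidablePred (Q n)] : 𝕜 :=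
  ∑' n, signEnumerator pm p0 p1 u (Q n) * z ^ n

/-- Generating function of the walks that never return to the axis, `z` marking length. -/
noncomputable def tailGF : 𝕜 :=
  ∑' n, tailWeight pm p0 p1 𝕜 n * z ^ n

variable {pm p0 p1 z u} (hz : ‖z‖ * (|pm| + |p0| + |p1|) < 1)
include hz

lemma hasSum_signGF (hu : ‖u‖ ≤ 1) (Q : ∀ n, (Fin n → Fin 3) → Prop)
    [∀ n, DecidablePred (Q n)] :
    HasSum (fun p : ℕ × ℕ =>
        ((∑ w with Q p.1 w ∧ signChanges w = p.2, walkWeight pm p0 p1 w : ℝ) : 𝕜) *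
          z ^ p.1 * u ^ p.2)
      (signGF pm p0 p1 z u Q) := by
  have hsummable : Summable fun n => ∑ w with Q n w,
      ‖(walkWeight pm p0 p1 w : 𝕜) * u ^ signChanges w * z ^ n‖ := by
    refine Summable.of_nonneg_of_le (fun n => sum_nonneg fun _ _ => norm_nonneg _) (fun n => ?_)
      (summable_geometric_of_lt_one (by positivity) hz)
    simp only [norm_mul _ (z ^ _), norm_pow z, ← sum_mul]
    rw [mul_comm ‖z‖, mul_pow]
    exact mul_le_mul_of_nonneg_right (sum_norm_walkWeight_mul_pow_le pm p0 p1 hu (Q n))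
      (by positivity)
  have hcoeff (p : ℕ × ℕ) :
      ((∑ w with Q p.1 w ∧ signChanges w = p.2, walkWeight pm p0 p1 w : ℝ) : 𝕜) *
          z ^ p.1 * u ^ p.2 =
        ∑ w ∈ univ.filter (Q p.1) with signChanges w = p.2,
          (walkWeight pm p0 p1 w : 𝕜) * u ^ signChanges w * z ^ p.1 := by
    rw [RCLike.ofReal_sum, filter_filter, sum_mul, sum_mul]
    refine sum_congr rfl fun w hw => ?_
    rw [(mem_filter.1 hw).2.2]
    ring
  have hsum := hasSum_prod_sum_filter_eq (fun n => univ.filter (Q n)) (fun _ => signChanges)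
    hsummable
  simpa only [hcoeff, signGF, signEnumerator, sum_mul] using hsum

lemma signGF_true_add_eq_mul_tailGF (hu : ‖u‖ ≤ 1) :
    signGF pm p0 p1 z u (fun _ _ => True) +
        (u - 1) * signGF pm p0 p1 z u (fun _ => IsPosBridge) =
      (signGF pm p0 p1 z u (fun n w => psum w n = 0) +
        (u - 1) * signGF pm p0 p1 z u (fun _ => IsPosBridge)) * tailGF pm p0 p1 z := by
  have hclass (Q : ∀ n, (Fin n → Fin 3) → Prop) [∀ n, DecidablePred (Q n)] :
      Summable fun n => ‖signEnumerator pm p0 p1 u (Q n) * z ^ n‖ :=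
    summable_norm_mul_pow_of_norm_le (by positivity)
      (fun n => norm_signEnumerator_le pm p0 p1 hu (Q n)) hz
  have htail : Summable fun n => ‖tailWeight pm p0 p1 𝕜 n * z ^ n‖ :=
    summable_norm_mul_pow_of_norm_le (by positivity) (norm_tailWeight_le pm p0 p1) hz
  have hpos := (hclass fun _ => IsPosBridge).of_norm.mul_left (u - 1)
  have hpivot : Summable fun n => ‖pivotEnumerator pm p0 p1 u n * z ^ n‖ := by
    simp only [pivotEnumerator, add_mul, mul_assoc]
    exact ((hclass fun n w => psum w n = 0).of_norm.add hpos).norm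
  have hbridge : signGF pm p0 p1 z u (fun n w => psum w n = 0) +
      (u - 1) * signGF pm p0 p1 z u (fun _ => IsPosBridge) =
        ∑' n, pivotEnumerator pm p0 p1 u n * z ^ n := by
    rw [signGF, signGF, ← tsum_mul_left, ← (hclass _).of_norm.tsum_add hpos]
    exact tsum_congr fun n => by rw [pivotEnumerator]; ring
  rw [hbridge, tailGF, tsum_mul_tsum_eq_tsum_sum_antidiagonal_of_summable_norm hpivot htail,
    signGF, signGF, ← tsum_mul_left, ← (hclass _).of_norm.tsum_add hpos]
  refine tsum_congr fun n => ?_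
  rw [← mul_assoc, ← add_mul, signEnumerator_true_add_eq_sum_antidiagonal, sum_mul]
  refine sum_congr rfl fun ij hij => ?_
  rw [← mem_antidiagonal.1 hij, pow_add]
  ring

lemma norm_mul_sum_weights_lt_one : ‖z * ((pm + p0 + p1 : ℝ) : 𝕜)‖ < 1 := by
  rw [norm_mul, RCLike.norm_ofReal]
  exact (mul_le_mul_of_nonneg_left (abs_add_three pm p0 p1) (norm_nonneg z)).trans_lt hz

lemma signGF_true_one :
    signGF pm p0 p1 z 1 (fun _ _ => True) = 1 / (1 - z * ((pm + p0 + p1 : ℝ) : 𝕜)) := by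
  simp only [signGF, signEnumerator_true_one, ← mul_pow]
  rw [mul_comm z, one_div]
  exact tsum_geometric_of_norm_lt_one (by rw [mul_comm]; exact norm_mul_sum_weights_lt_one hz)

lemma signGF_true_one_eq_mul_tailGF :
    signGF pm p0 p1 z 1 (fun _ _ => True) =
      signGF pm p0 p1 z 1 (fun n w => psum w n = 0) * tailGF pm p0 p1 z := by
  simpa using signGF_true_add_eq_mul_tailGF (u := (1 : 𝕜)) hz (by simp)

lemma signGF_bridge_one_ne_zero : signGF pm p0 p1 z 1 (fun n w => psum w n = 0) ≠ 0 := by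
  have hne : 1 - z * ((pm + p0 + p1 : ℝ) : 𝕜) ≠ 0 := fun h => by
    have := norm_mul_sum_weights_lt_one hz
    rw [← sub_eq_zero.1 h, norm_one] at this
    exact this.false
  refine left_ne_zero_of_mul (b := tailGF pm p0 p1 z) ?_
  rw [← signGF_true_one_eq_mul_tailGF hz, signGF_true_one hz]
  exact one_div_ne_zero hne

lemma tailGF_eq_div :
    tailGF pm p0 p1 z = 1 / (1 - z * ((pm + p0 + p1 : ℝ) : 𝕜)) /
      signGF pm p0 p1 z 1 (fun n w => psum w n = 0) := by
  rw [eq_div_iff (signGF_bridge_one_ne_zero hz), ← signGF_true_one hz,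
    signGF_true_one_eq_mul_tailGF hz, mul_comm]

end GeneratingFunction

end

theorem walks_sign_changes_gf_general {𝕜 : Type*} [RCLike 𝕜] (pm p0 p1 : ℝ) {z u : 𝕜}
    (hz : ‖z‖ * (|pm| + |p0| + |p1|) < 1) (hu : ‖u‖ ≤ 1) :
    let W : 𝕜 := 1 / (1 - z * ((pm + p0 + p1 : ℝ) : 𝕜))
    Summable (fun p : ℕ × ℕ => (walkSignW pm p0 p1 p.1 p.2 : 𝕜) * z ^ p.1 * u ^ p.2) ∧
    Summable (fun p : ℕ × ℕ => (bridgeSignW pm p0 p1 p.1 p.2 : 𝕜) * z ^ p.1 * u ^ p.2) ∧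
    Summable (fun p : ℕ × ℕ => (posBridgeSignW pm p0 p1 p.1 p.2 : 𝕜) * z ^ p.1 * u ^ p.2) ∧
    Summable (fun p : ℕ × ℕ => (bridgeSignW pm p0 p1 p.1 p.2 : 𝕜) * z ^ p.1) ∧
    (∑' p : ℕ × ℕ, (walkSignW pm p0 p1 p.1 p.2 : 𝕜) * z ^ p.1 * u ^ p.2) =
      (∑' p : ℕ × ℕ, (bridgeSignW pm p0 p1 p.1 p.2 : 𝕜) * z ^ p.1 * u ^ p.2) *
        (W / (∑' p : ℕ × ℕ, (bridgeSignW pm p0 p1 p.1 p.2 : 𝕜) * z ^ p.1)) +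
      (∑' p : ℕ × ℕ, (posBridgeSignW pm p0 p1 p.1 p.2 : 𝕜) * z ^ p.1 * u ^ p.2) *
        (W / (∑' p : ℕ × ℕ, (bridgeSignW pm p0 p1 p.1 p.2 : 𝕜) * z ^ p.1) - 1) * (u - 1) := by
  intro _
  have hwalk := hasSum_signGF hz hu fun _ _ => True
  have hbridge := hasSum_signGF hz hu fun n w => psum w n = 0
  have hpos := hasSum_signGF hz hu fun _ => IsPosBridge
  have hbridge_one := hasSum_signGF hz (u := 1) (by simp) fun n w => psum w n = 0
  simp only [true_and] at hwalk
  simp only [one_pow, mul_one] at hbridge_one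
  refine ⟨hwalk.summable, hbridge.summable, hpos.summable, hbridge_one.summable, ?_⟩
  unfold walkSignW bridgeSignW posBridgeSignW
  rw [hwalk.tsum_eq, hbridge.tsum_eq, hpos.tsum_eq, hbridge_one.tsum_eq, ← tailGF_eq_div hz]
  linear_combination signGF_true_add_eq_mul_tailGF hz hu

/-- **Bivariate generating function of walks by sign changes**:
`W(z,u) = B(z,u)W(z)/B(z) + B₊(z,u)(W(z)/B(z) - 1)(u - 1)`. -/
theorem walks_sign_changes_gf (pm p0 p1 : ℝ)
    (hpm : 0 < pm) (hp0 : 0 < p0) (hp1 : 0 < p1) :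
    let P1 : ℝ := pm + p0 + p1
    let W : ℝ → ℝ := fun z => 1 / (1 - z * P1)
    ∀ z : ℝ, 0 < z → z < 1 / P1 → ∀ u : ℝ, 0 ≤ u → u ≤ 1 →
      Summable (fun p : ℕ × ℕ => walkSignW pm p0 p1 p.1 p.2 * z ^ p.1 * u ^ p.2) ∧
      Summable (fun p : ℕ × ℕ => bridgeSignW pm p0 p1 p.1 p.2 * z ^ p.1 * u ^ p.2) ∧
      Summable (fun p : ℕ × ℕ => posBridgeSignW pm p0 p1 p.1 p.2 * z ^ p.1 * u ^ p.2) ∧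
      Summable (fun p : ℕ × ℕ => bridgeSignW pm p0 p1 p.1 p.2 * z ^ p.1) ∧
      (∑' p : ℕ × ℕ, walkSignW pm p0 p1 p.1 p.2 * z ^ p.1 * u ^ p.2) =
        (∑' p : ℕ × ℕ, bridgeSignW pm p0 p1 p.1 p.2 * z ^ p.1 * u ^ p.2) *
          (W z / (∑' p : ℕ × ℕ, bridgeSignW pm p0 p1 p.1 p.2 * z ^ p.1)) +
        (∑' p : ℕ × ℕ, posBridgeSignW pm p0 p1 p.1 p.2 * z ^ p.1 * u ^ p.2) *
          (W z / (∑' p : ℕ × ℕ, bridgeSignW pm p0 p1 p.1 p.2 * z ^ p.1) - 1) * (u - 1) := by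
  intro P1 _ z hz hzP u hu hu1
  have hzP1 : ‖z‖ * (|pm| + |p0| + |p1|) < 1 := by
    rwa [Real.norm_of_nonneg hz.le, abs_of_pos hpm, abs_of_pos hp0, abs_of_pos hp1,
      ← lt_div_iff₀ (by positivity)]
  exact walks_sign_changes_gf_general pm p0 p1 hzP1 (by rwa [Real.norm_of_nonneg hu])
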